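/- Let T be a weakly G-approximable triangulated category (i.e. (T, R, A) is weakly G-approximable for some orthogonal metric R and integer A > 0), and let R′ be any orthogonal metric on T that is ℕ-equivalent to R^G. Then there exists an integer A′ > 0 such that (T, R′, A′) is weakly G-approximable. If T is moreover G-approximable, then A′ can be chosen so that (T, R′, A′) is G-approximable. -/

import Mathlib

namespace GApprox

open CategoryTheory CategoryTheory.Limits CategoryTheory.Pretriangulated

universe w v u

variable (C : Type u) [Category.{v} C] [HasZeroObject C] [HasShift C ℤ]
  [Preadditive C] [∀ n : ℤ, (shiftFunctor C n).Additive] [Pretriangulated C]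
  [HasCoproducts.{v} C]

/-- The right orthogonal of a class of objects. -/
def rOrth (A : Set C) : Set C := {X | ∀ a ∈ A, ∀ f : a ⟶ X, f = 0}

/-- The left orthogonal of a class of objects. -/
def lOrth (A : Set C) : Set C := {X | ∀ a ∈ A, ∀ f : X ⟶ a, f = 0}

/-- `Hom(A, B) = 0`. -/
def homZero (A B : Set C) : Prop := ∀ a ∈ A, ∀ b ∈ B, ∀ f : a ⟶ b, f = 0

/-- The star operation `A ⋆ B`: objects `Y` admitting a distinguished triangle
`X ⟶ Y ⟶ Z ⟶ ΣX` with `X ∈ A` and `Z ∈ B`. -/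
def starSet (A B : Set C) : Set C :=
  {Y | ∃ (X Z : C) (f : X ⟶ Y) (g : Y ⟶ Z) (h : Z ⟶ X⟦(1 : ℤ)⟧),
    Triangle.mk f g h ∈ (distTriang C) ∧ X ∈ A ∧ Z ∈ B}

/-- The (strictly full) shift `Σⁿ A` of a class of objects. -/
def shiftSet (n : ℤ) (A : Set C) : Set C :=
  {X | ∃ a ∈ A, Nonempty (X ≅ (shiftFunctor C n).obj a)}

/-- An object is compact if any map to a coproduct factors through a finite subcoproduct. -/
def IsCompactObj (X : C) : Prop :=
  ∀ (α : Type v) (f : α → C) (g : X ⟶ ∐ f),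
    ∃ (s : Finset α) (h : X ⟶ ∐ (fun i : {a : α // a ∈ s} => f i.1)),
      g = h ≫ Sigma.desc (fun i => Sigma.ι f i.1)

/-- The class of compact objects `T^c`. -/
def compacts : Set C := {X | IsCompactObj C X}

/-- The category is compactly generated. -/
def CompactlyGenerated : Prop :=
  ∀ X : C, (∀ K ∈ compacts C, ∀ f : K ⟶ X, f = 0) → IsZero X

/-- Closure under direct summands (retracts), `smd`. -/
def smd (A : Set C) : Set C :=
  {X | ∃ Y ∈ A, ∃ (i : X ⟶ Y) (r : Y ⟶ X), i ≫ r = 𝟙 X}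

/-- Closure of a class of objects under finite direct sums and extensions (`coprod`). -/
inductive extClosure (U : Set C) : C → Prop
  | of {X : C} : X ∈ U → extClosure U X
  | zero {X : C} : IsZero X → extClosure U X
  | ext {X Y Z : C} (f : X ⟶ Y) (g : Y ⟶ Z) (h : Z ⟶ X⟦(1 : ℤ)⟧) :
      Triangle.mk f g h ∈ (distTriang C) → extClosure U X → extClosure U Z → extClosure U Y

/-- Closure of a class of objects under arbitrary coproducts, extensions and
direct summands. -/
inductive bigClosure (U : Set C) : C → Prop
  | of {X : C} : X ∈ U → bigClosure U X
  | zero {X : C} : IsZero X → bigClosure U X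
  | coprod {α : Type v} (f : α → C) :
      (∀ i, bigClosure U (f i)) → ∀ {X : C}, (X ≅ ∐ f) → bigClosure U X
  | ext {X Y Z : C} (f : X ⟶ Y) (g : Y ⟶ Z) (h : Z ⟶ X⟦(1 : ℤ)⟧) :
      Triangle.mk f g h ∈ (distTriang C) → bigClosure U X → bigClosure U Z → bigClosure U Y
  | retract {X Y : C} (i : X ⟶ Y) (r : Y ⟶ X) :
      i ≫ r = 𝟙 X → bigClosure U Y → bigClosure U X

/-- Closure of a class of objects under finite direct sums, `add`. -/
def addClosure (U : Set C) : Set C :=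
  {X | ∃ (n : ℕ) (f : ULift.{v} (Fin n) → C), (∀ i, f i ∈ U) ∧ Nonempty (X ≅ ∐ f)}

/-- Closure of a class of objects under arbitrary coproducts, `Add`. -/
def bigAddClosure (U : Set C) : Set C :=
  {X | ∃ (α : Type v) (f : α → C), (∀ i, f i ∈ U) ∧ Nonempty (X ≅ ∐ f)}

/-- `coprod_n(U)`. -/
def coprodPow (U : Set C) : ℕ → Set C
  | 0 => {X | IsZero X}
  | n + 1 => starSet C (addClosure C U) (coprodPow U n)

/-- `Coprod_n(U)`. -/
def coprodPowBig (U : Set C) : ℕ → Set C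
  | 0 => {X | IsZero X}
  | n + 1 => starSet C (bigAddClosure C U) (coprodPowBig U n)

/-- `G[a,b] = ∪ { G^m : a ≤ m ≤ b }`. -/
def unionIcc (G : ℤ → Set C) (a b : ℤ) : Set C := ⋃ m ∈ Set.Icc a b, G m

/-- `G(-∞,b] = ∪ { G^m : m ≤ b }`. -/
def unionIic (G : ℤ → Set C) (b : ℤ) : Set C := ⋃ m ∈ Set.Iic b, G m

/-- `G(-∞,∞) = ∪ { G^m : m ∈ ℤ }`. -/
def unionAll (G : ℤ → Set C) : Set C := ⋃ m : ℤ, G m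

/-- `G^{[a,b]} = smd(coprod(G[a,b]))`. -/
def gInt (G : ℤ → Set C) (a b : ℤ) : Set C :=
  smd C {X | extClosure C (unionIcc C G a b) X}

/-- `G^{(-∞,b]} = smd(coprod(G(-∞,b]))`. -/
def gIic (G : ℤ → Set C) (b : ℤ) : Set C :=
  smd C {X | extClosure C (unionIic C G b) X}

/-- `G^{[a,b]}_k = smd(coprod_k(G[a,b]))`. -/
def gIntPow (G : ℤ → Set C) (a b k : ℤ) : Set C :=
  smd C (coprodPow C (unionIcc C G a b) k.toNat)

/-- `Ḡ^{[a,b]}`. -/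
def gBarInt (G : ℤ → Set C) (a b : ℤ) : Set C :=
  {X | bigClosure C (unionIcc C G a b) X}

/-- `Ḡ^{(-∞,b]}`. -/
def gBarIic (G : ℤ → Set C) (b : ℤ) : Set C :=
  {X | bigClosure C (unionIic C G b) X}

/-- `Ḡ^{[a,b]}_k = smd(Coprod_k(G[a,b]))`. -/
def gBarIntPow (G : ℤ → Set C) (a b k : ℤ) : Set C :=
  smd C (coprodPowBig C (unionIcc C G a b) k.toNat)

/-- `M^G_n := G^{(-∞,-n]}`. -/
def MG (G : ℤ → Set C) (n : ℤ) : Set C := gIic C G (-n)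

/-- `R^G_n := ⊥((M^G_n)^⊥)`, orthogonals taken in the whole category. -/
def RG (G : ℤ → Set C) (n : ℤ) : Set C := lOrth C (rOrth C (MG C G n))

/-- A pre-generating sequence. -/
structure IsPreGenSeq (G : ℤ → Set C) : Prop where
  compact : ∀ i : ℤ, G i ⊆ compacts C
  generates : smd C {X | extClosure C (unionAll C G) X} = compacts C

/-- A generating sequence. -/
structure IsGenSeq (G : ℤ → Set C) extends IsPreGenSeq C G : Prop where
  shift_cond : ∀ n : ℤ,
    shiftSet C (-1) (G n) ∪ G n ∪ shiftSet C 1 (G n) ⊆ gInt C G (n - 1) (n + 1)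

/-- A finite generating sequence. -/
structure IsFinGenSeq (G : ℤ → Set C) extends IsGenSeq C G : Prop where
  finite : ∀ i : ℤ, (G i).Finite

/-- ℕ-equivalence of generating sequences. -/
def GenSeqNEquiv (G G' : ℤ → Set C) : Prop :=
  ∃ N : ℤ, 0 ≤ N ∧ (∀ n : ℤ, G' n ⊆ gInt C G (n - N) (n + N)) ∧
    ∀ n : ℤ, G n ⊆ gInt C G' (n - N) (n + N)

/-- ℕ-equivalence of (extended good) metrics. -/
def MetricNEquiv (M N : ℤ → Set C) : Prop :=
  ∃ n : ℤ, 0 ≤ n ∧ (∀ i : ℤ, M (i + n) ⊆ N i) ∧ ∀ i : ℤ, N (i + n) ⊆ M i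

/-- An extended good metric. -/
structure IsExtGoodMetric (M : ℤ → Set C) : Prop where
  zero_mem : ∀ (n : ℤ) (X : C), IsZero X → X ∈ M n
  iso_closed : ∀ (n : ℤ) ⦃X Y : C⦄, (X ≅ Y) → X ∈ M n → Y ∈ M n
  star_subset : ∀ n : ℤ, starSet C (M n) (M n) ⊆ M n
  shift_one : ∀ n : ℤ, shiftSet C 1 (M (n + 1)) ⊆ M n
  antitone : ∀ n : ℤ, M (n + 1) ⊆ M n
  shift_neg_one : ∀ n : ℤ, shiftSet C (-1) (M (n + 1)) ⊆ M n

/-- An orthogonal metric. -/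
structure IsOrthMetric (M : ℤ → Set C) extends IsExtGoodMetric C M : Prop where
  orth : ∀ n : ℤ, lOrth C (rOrth C (M n)) = M n

/-- The closure of the compacts `T̄^c := ∩ₙ T^c ⋆ Rₙ`. -/
def closCompacts (Rm : ℤ → Set C) : Set C := ⋂ n : ℤ, starSet C (compacts C) (Rm n)

/-- `(T, R, A)` is `G`-preapproximable. -/
structure IsGPreApprox (G Rm : ℤ → Set C) (A : ℤ) : Prop where
  orthMetric : IsOrthMetric C Rm
  A_pos : 0 < A
  cond0 : ∀ i : ℤ, MG C G i ⊆ ⋃ n ∈ {n : ℤ | |n| ≤ A}, shiftSet C n (MG C G (i + 1))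
  cond1 : ∀ i : ℤ, MG C G (i + A) ⊆ Rm i ∩ compacts C
  cond2 : ∀ n : ℤ, ∃ N : ℤ, ∀ i : ℤ, N ≤ i → homZero C (G n) (Rm i)

/-- There is a distinguished triangle `E ⟶ F ⟶ D ⟶ ΣE` with `E ∈ S` and `D ∈ D`. -/
def approxTriangle (F : C) (S D : Set C) : Prop :=
  ∃ (E Dd : C) (f : E ⟶ F) (g : F ⟶ Dd) (h : Dd ⟶ E⟦(1 : ℤ)⟧),
    Triangle.mk f g h ∈ (distTriang C) ∧ E ∈ S ∧ Dd ∈ D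

/-- `(T, R, A)` is weakly `G`-approximable. -/
structure IsWeakGApprox (G Rm : ℤ → Set C) (A : ℤ) extends IsGPreApprox C G Rm A : Prop where
  hom_vanish : ∀ n i : ℤ, A ≤ n + i → homZero C (G n) (Rm i)
  approx : ∀ i : ℤ, ∀ F ∈ Rm i,
    approxTriangle C F (gBarInt C G (-A - i) (A - i)) (Rm (i + 1))

/-- `(T, R, A)` is `G`-approximable. -/
structure IsGApprox (G Rm : ℤ → Set C) (A : ℤ) extends IsWeakGApprox C G Rm A : Prop where
  approx' : ∀ i : ℤ, ∀ F ∈ Rm i,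
    approxTriangle C F (gBarIntPow C G (-A - i) (A - i) A) (Rm (i + 1))

/-- `(T, R, A)` is weakly `G`-quasiapproximable. -/
structure IsWeakGQuasiApprox (G Rm : ℤ → Set C) (A : ℤ) extends IsGPreApprox C G Rm A : Prop where
  hom_vanish : ∀ n i : ℤ, A ≤ n + i → homZero C (G n) (Rm i)
  approx : ∀ i : ℤ, ∀ F ∈ Rm i ∩ closCompacts C Rm,
    approxTriangle C F (gBarInt C G (-A - i) (A - i)) (Rm (i + 1) ∩ closCompacts C Rm)

/-- `(T, R, A)` is `G`-quasiapproximable. -/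
structure IsGQuasiApprox (G Rm : ℤ → Set C) (A : ℤ) extends IsWeakGQuasiApprox C G Rm A : Prop where
  approx' : ∀ i : ℤ, ∀ F ∈ Rm i ∩ closCompacts C Rm,
    approxTriangle C F (gBarIntPow C G (-A - i) (A - i) A) (Rm (i + 1) ∩ closCompacts C Rm)

/-- The coproduct of a sequence of objects. -/
noncomputable def seqCoprod (E : ℕ → C) : C := ∐ (fun n : ULift.{v} ℕ => E n.down)

/-- The canonical inclusion into the coproduct of a sequence. -/
noncomputable def seqInj (E : ℕ → C) (n : ℕ) : E n ⟶ seqCoprod C E :=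
  Sigma.ι (fun n : ULift.{v} ℕ => E n.down) (ULift.up n)

/-- The map `1 - shift` on the coproduct of a sequence. -/
noncomputable def oneMinusShift (E : ℕ → C) (e : ∀ n, E n ⟶ E (n + 1)) :
    seqCoprod C E ⟶ seqCoprod C E :=
  Sigma.desc (fun n => seqInj C E n.down - e n.down ≫ seqInj C E (n.down + 1))

/-- `H`, equipped with `π`, `δ`, is a homotopy colimit of the sequence `E`. -/
def IsHocolim (E : ℕ → C) (e : ∀ n, E n ⟶ E (n + 1)) (H : C)
    (π : seqCoprod C E ⟶ H) (δ : H ⟶ (seqCoprod C E)⟦(1 : ℤ)⟧) : Prop :=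
  Triangle.mk (oneMinusShift C E e) π δ ∈ (distTriang C)

/-- A single compact generator. -/
def IsCompactGenerator (G₀ : C) : Prop :=
  IsCompactObj C G₀ ∧ ∀ X : C, (∀ n : ℤ, ∀ f : (shiftFunctor C n).obj G₀ ⟶ X, f = 0) → IsZero X

/-- The strictly full subcategory `{Σʲ G₀}`. -/
def singletonShift (G₀ : C) (j : ℤ) : Set C :=
  {X | Nonempty (X ≅ (shiftFunctor C j).obj G₀)}

/-- The generating sequence `Gⁿ := {Σ⁻ⁿ G₀}`. -/
def genSeqNeg (G₀ : C) (n : ℤ) : Set C := singletonShift C G₀ (-n)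

/-- The generating sequence `Gⁿ := {Σⁿ G₀}`. -/
def genSeqPos (G₀ : C) (n : ℤ) : Set C := singletonShift C G₀ n

section Helpers

set_option linter.unusedSectionVars false

variable {C}

section Exact

variable {X Y Z : C} {f : X ⟶ Y} {g : Y ⟶ Z} {h : Z ⟶ X⟦(1 : ℤ)⟧}

theorem ye2 (hT : Triangle.mk f g h ∈ (distTriang C)) {t : C} (u : Y ⟶ t) (hu : f ≫ u = 0) :
    ∃ v : Z ⟶ t, u = g ≫ v := Triangle.yoneda_exact₂ _ hT u hu

theorem ye3 (hT : Triangle.mk f g h ∈ (distTriang C)) {t : C} (u : Z ⟶ t) (hu : g ≫ u = 0) :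
    ∃ v : X⟦(1 : ℤ)⟧ ⟶ t, u = h ≫ v := Triangle.yoneda_exact₃ _ hT u hu

theorem ye4 (hT : Triangle.mk f g h ∈ (distTriang C)) {t : C} (u : X⟦(1 : ℤ)⟧ ⟶ t)
    (hu : h ≫ u = 0) : ∃ v : Y⟦(1 : ℤ)⟧ ⟶ t, u = (-f⟦(1 : ℤ)⟧') ≫ v :=
  Triangle.yoneda_exact₃ _ (rot_of_distTriang _ hT) u hu

theorem ye5 (hT : Triangle.mk f g h ∈ (distTriang C)) {t : C} (u : Y⟦(1 : ℤ)⟧ ⟶ t)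
    (hu : (-f⟦(1 : ℤ)⟧') ≫ u = 0) : ∃ v : Z⟦(1 : ℤ)⟧ ⟶ t, u = (-g⟦(1 : ℤ)⟧') ≫ v :=
  Triangle.yoneda_exact₃ _ (rot_of_distTriang _ (rot_of_distTriang _ hT)) u hu

theorem ce2 (hT : Triangle.mk f g h ∈ (distTriang C)) {t : C} (u : t ⟶ Y) (hu : u ≫ g = 0) :
    ∃ v : t ⟶ X, u = v ≫ f := Triangle.coyoneda_exact₂ _ hT u hu

theorem ce3 (hT : Triangle.mk f g h ∈ (distTriang C)) {t : C} (u : t ⟶ Z) (hu : u ≫ h = 0) :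
    ∃ v : t ⟶ Y, u = v ≫ g := Triangle.coyoneda_exact₃ _ hT u hu

/-- The fill-in axiom, with identity on the first objects. -/
theorem fill (hT : Triangle.mk f g h ∈ (distTriang C)) {Y' Z' : C} {x : X ⟶ Y'} {y : Y' ⟶ Z'}
    {q : Z' ⟶ Z} (hT' : Triangle.mk x y (q ≫ h) ∈ (distTriang C)) :
    ∃ m : Y' ⟶ Y, x ≫ m = f ∧ y ≫ q = m ≫ g := by
  obtain ⟨m, h1, h2⟩ := complete_distinguished_triangle_morphism₂ _ _ hT' hT (𝟙 X) q
    (by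
      change (q ≫ h) ≫ (shiftFunctor C (1 : ℤ)).map (𝟙 X) = q ≫ h
      rw [CategoryTheory.Functor.map_id, Category.comp_id])
  exact ⟨m, h1.trans (Category.id_comp f), h2⟩

end Exact

/-- Extensions of objects with no map to `t` have no map to `t`. -/
theorem hom_zero_ext {X Y Z t : C} {f : X ⟶ Y} {g : Y ⟶ Z} {h : Z ⟶ X⟦(1 : ℤ)⟧}
    (hT : Triangle.mk f g h ∈ (distTriang C))
    (hX : ∀ u : X ⟶ t, u = 0) (hZ : ∀ u : Z ⟶ t, u = 0) (u : Y ⟶ t) : u = 0 := by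
  obtain ⟨v, hv⟩ := ye2 hT u (hX _)
  have hv0 : v = 0 := hZ v
  rw [hv, hv0, comp_zero]

theorem hom_zero_extClosure {U : Set C} {t : C} (hU : ∀ X ∈ U, ∀ u : X ⟶ t, u = 0)
    {X : C} (hX : extClosure C U X) : ∀ u : X ⟶ t, u = 0 := by
  induction hX with
  | of h => exact hU _ h
  | zero h => exact fun u => h.eq_of_src _ _
  | ext f g h hT _ _ h1 h2 => exact hom_zero_ext hT h1 h2

theorem hom_zero_smd {U : Set C} {t : C} (hU : ∀ X ∈ U, ∀ u : X ⟶ t, u = 0)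
    {X : C} (hX : X ∈ smd C U) : ∀ u : X ⟶ t, u = 0 := by
  obtain ⟨Y, hY, i, r, hir⟩ := hX
  intro u
  rw [← Category.id_comp u, ← hir, Category.assoc, hU Y hY (r ≫ u), comp_zero]

theorem hom_zero_bigClosure {U : Set C} {t : C} (hU : ∀ X ∈ U, ∀ u : X ⟶ t, u = 0)
    {X : C} (hX : bigClosure C U X) : ∀ u : X ⟶ t, u = 0 := by
  induction hX with
  | of h => exact hU _ h
  | zero h => exact fun u => h.eq_of_src _ _
  | coprod f _ e ih =>
    intro u
    have h0 : e.inv ≫ u = 0 := by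
      apply Sigma.hom_ext
      intro b
      rw [ih b (Sigma.ι f b ≫ e.inv ≫ u), comp_zero]
    rw [← Category.id_comp u, ← e.hom_inv_id, Category.assoc, h0, comp_zero]
  | ext f g h hT _ _ h1 h2 => exact hom_zero_ext hT h1 h2
  | retract i r hir _ ih =>
    intro u
    rw [← Category.id_comp u, ← hir, Category.assoc, ih (r ≫ u), comp_zero]

theorem extClosure_mono {U V : Set C} (h : U ⊆ V) {X : C} (hX : extClosure C U X) :
    extClosure C V X := by
  induction hX with
  | of hx => exact .of (h hx)
  | zero hx => exact .zero hx
  | ext f g k hT _ _ h1 h2 => exact .ext f g k hT h1 h2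

theorem bigClosure_mono {U V : Set C} (h : U ⊆ V) {X : C} (hX : bigClosure C U X) :
    bigClosure C V X := by
  induction hX with
  | of hx => exact .of (h hx)
  | zero hx => exact .zero hx
  | coprod f _ e ih => exact .coprod f ih e
  | ext f g k hT _ _ h1 h2 => exact .ext f g k hT h1 h2
  | retract i r hir _ ih => exact .retract i r hir ih

theorem smd_mono {U V : Set C} (h : U ⊆ V) : smd C U ⊆ smd C V := by
  rintro X ⟨Y, hY, i, r, hir⟩
  exact ⟨Y, h hY, i, r, hir⟩

theorem mem_smd {U : Set C} {X : C} (h : X ∈ U) : X ∈ smd C U :=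
  ⟨X, h, 𝟙 X, 𝟙 X, Category.id_comp _⟩

theorem unionIcc_mono (G : ℤ → Set C) {a b a' b' : ℤ} (ha : a' ≤ a) (hb : b ≤ b') :
    unionIcc C G a b ⊆ unionIcc C G a' b' :=
  Set.biUnion_subset_biUnion_left (Set.Icc_subset_Icc ha hb)

theorem gBarInt_mono (G : ℤ → Set C) {a b a' b' : ℤ} (ha : a' ≤ a) (hb : b ≤ b') :
    gBarInt C G a b ⊆ gBarInt C G a' b' :=
  fun _ hX => bigClosure_mono (unionIcc_mono G ha hb) hX

theorem MG_anti (G : ℤ → Set C) {m n : ℤ} (h : m ≤ n) : MG C G n ⊆ MG C G m :=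
  smd_mono fun _ hX => extClosure_mono
    (Set.biUnion_subset_biUnion_left (Set.Iic_subset_Iic.2 (neg_le_neg h))) hX

theorem lr_mono {A B : Set C} (h : A ⊆ B) :
    lOrth C (rOrth C A) ⊆ lOrth C (rOrth C B) :=
  fun _ hX t ht f => hX t (fun a ha => ht a (h ha)) f

theorem subset_lr (A : Set C) : A ⊆ lOrth C (rOrth C A) :=
  fun X hX _ ht f => ht X hX f

theorem metric_anti {M : ℤ → Set C} (hM : IsExtGoodMetric C M) {m n : ℤ} (h : m ≤ n) :
    M n ⊆ M m := by
  obtain ⟨k, rfl⟩ := Int.le.dest h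
  induction k with
  | zero => simp
  | succ k ih =>
    refine Set.Subset.trans ?_ (ih (by omega))
    have := hM.antitone (m + k)
    rwa [show m + (k : ℤ) + 1 = m + ((k + 1 : ℕ) : ℤ) by push_cast; ring] at this

/-! ### Towers: a replacement for associativity of the star operation -/

/-- `g` is a composite of `k` maps with fibres in `P`. -/
inductive Tower (P : Set C) : ℕ → ∀ {F F' : C}, (F ⟶ F') → Prop
  | nil (F : C) : Tower P 0 (𝟙 F)
  | cons {k : ℕ} {X F F₁ F' : C} (a : X ⟶ F) (c : F ⟶ F₁) (d : F₁ ⟶ X⟦(1 : ℤ)⟧)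
      (g : F₁ ⟶ F') : Triangle.mk a c d ∈ (distTriang C) → X ∈ P → Tower P k g →
      Tower P (k + 1) (c ≫ g)

theorem Tower.comp {P : Set C} {k l : ℕ} {F F' F'' : C} {g : F ⟶ F'} {g' : F' ⟶ F''}
    (h : Tower P k g) (h' : Tower P l g') : Tower P (k + l) (g ≫ g') := by
  induction h with
  | nil F => rw [Category.id_comp, Nat.zero_add]; exact h'
  | cons a c d g hT hX _ ih =>
    rw [Category.assoc, Nat.add_right_comm]
    have hfin := ih h'
    exact .cons a c d _ hT hX hfin

/-- Every map out of `E` is annihilated by a tower of length `k`. -/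
def Kill (P : Set C) (k : ℕ) (E : C) : Prop :=
  ∀ (F : C) (f : E ⟶ F), ∃ (F' : C) (g : F ⟶ F'), Tower P k g ∧ f ≫ g = 0

theorem kill_of_coprodPowBig {U : Set C} (k : ℕ) : ∀ {E : C}, E ∈ coprodPowBig C U k →
    Kill (bigAddClosure C U) k E := by
  induction k with
  | zero =>
    intro E hE F f
    exact ⟨F, 𝟙 F, .nil F, IsZero.eq_of_src hE _ _⟩
  | succ k ih =>
    rintro E ⟨X, Z, x, z, w, hT, hX, hZ⟩ F f
    obtain ⟨F₁, c, d, hT'⟩ := distinguished_cocone_triangle (x ≫ f)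
    have h0 : x ≫ f ≫ c = 0 := by
      rw [← Category.assoc]
      exact comp_distTriang_mor_zero₁₂ _ hT'
    obtain ⟨v, hv⟩ := ye2 hT (f ≫ c) h0
    obtain ⟨F', g, hg, hvg⟩ := ih hZ F₁ v
    refine ⟨F', c ≫ g, .cons _ c d g hT' hX hg, ?_⟩
    rw [← Category.assoc, hv, Category.assoc]
    have hvg' : v ≫ g = 0 := hvg
    rw [hvg', comp_zero]

theorem Kill.retract {P : Set C} {k : ℕ} {E E' : C} (h : Kill P k E') (i : E ⟶ E')
    (r : E' ⟶ E) (hir : i ≫ r = 𝟙 E) : Kill P k E := by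
  intro F f
  obtain ⟨F', g, hg, h0⟩ := h F (r ≫ f)
  refine ⟨F', g, hg, ?_⟩
  rw [← Category.id_comp f, ← hir, Category.assoc, Category.assoc, ← Category.assoc r, h0,
    comp_zero]

theorem Kill.ext {P : Set C} {a b : ℕ} {X Y Z : C} {f : X ⟶ Y} {g : Y ⟶ Z}
    {h : Z ⟶ X⟦(1 : ℤ)⟧} (hT : Triangle.mk f g h ∈ (distTriang C))
    (hX : Kill P a X) (hZ : Kill P b Z) : Kill P (a + b) Y := by
  intro F u
  obtain ⟨F', p, hp, hp0⟩ := hX F (f ≫ u)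
  obtain ⟨v, hv⟩ := ye2 hT (u ≫ p) (by
    rw [← Category.assoc]; exact hp0)
  obtain ⟨F'', q, hq, hq0⟩ := hZ F' v
  refine ⟨F'', p ≫ q, hp.comp hq, ?_⟩
  rw [← Category.assoc, hv, Category.assoc]
  have hq0' : v ≫ q = 0 := hq0
  rw [hq0', comp_zero]

theorem Tower.lift {U : Set C} {k : ℕ} {F F' : C} {g : F ⟶ F'}
    (hg : Tower (bigAddClosure C U) k g) :
    ∃ Q ∈ coprodPowBig C U k, ∃ q : Q ⟶ F, ∀ (K : C) (h : K ⟶ F), h ≫ g = 0 →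
      ∃ l : K ⟶ Q, h = l ≫ q := by
  induction hg with
  | nil F =>
    obtain ⟨O, hO⟩ := HasZeroObject.zero (C := C)
    refine ⟨O, hO, 0, fun K h h0 => ⟨0, ?_⟩⟩
    rw [Category.comp_id] at h0
    rw [h0, comp_zero]
  | @cons k X F F₁ F' a c d g hT hX _ ih =>
    obtain ⟨Q, hQ, q, hq⟩ := ih
    obtain ⟨Q', j, p, hT'⟩ := distinguished_cocone_triangle₂ (q ≫ d)
    obtain ⟨m, hm1', hm2'⟩ := fill hT hT'
    refine ⟨Q', ⟨X, Q, j, p, q ≫ d, hT', hX, hQ⟩, m, fun K h h0 => ?_⟩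
    obtain ⟨l, hl⟩ := hq K (h ≫ c) (by rw [Category.assoc]; exact h0)
    have hcd : c ≫ d = 0 := comp_distTriang_mor_zero₂₃ _ hT
    obtain ⟨l', hl'⟩ := ce3 hT' l (by
      change l ≫ q ≫ d = 0
      rw [← Category.assoc, ← hl, Category.assoc, hcd, comp_zero])
    have hl'' : l = l' ≫ p := hl'
    obtain ⟨x, hx⟩ := ce2 hT (h - l' ≫ m) (by
      change (h - l' ≫ m) ≫ c = 0
      rw [Preadditive.sub_comp, Category.assoc, ← hm2', ← Category.assoc l', ← hl'', hl, sub_self])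
    have hx' : h - l' ≫ m = x ≫ a := hx
    refine ⟨l' + x ≫ j, ?_⟩
    rw [Preadditive.add_comp, Category.assoc, hm1', ← hx']
    abel

theorem Kill.mem {U : Set C} {k : ℕ} {E : C} (h : Kill (bigAddClosure C U) k E) :
    E ∈ smd C (coprodPowBig C U k) := by
  obtain ⟨F', g, hg, h0⟩ := h E (𝟙 E)
  obtain ⟨Q, hQ, q, hq⟩ := hg.lift
  obtain ⟨l, hl⟩ := hq E (𝟙 E) h0
  exact ⟨Q, hQ, l, q, hl.symm⟩

theorem kill_iff {U : Set C} {k : ℕ} {E : C} : Kill (bigAddClosure C U) k E ↔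
    E ∈ smd C (coprodPowBig C U k) :=
  ⟨Kill.mem, fun ⟨_, hY, i, r, hir⟩ => (kill_of_coprodPowBig k hY).retract i r hir⟩

theorem smdPow_star {U : Set C} {a b : ℕ} {X Y Z : C} {f : X ⟶ Y} {g : Y ⟶ Z}
    {h : Z ⟶ X⟦(1 : ℤ)⟧} (hT : Triangle.mk f g h ∈ (distTriang C))
    (hX : X ∈ smd C (coprodPowBig C U a)) (hZ : Z ∈ smd C (coprodPowBig C U b)) :
    Y ∈ smd C (coprodPowBig C U (a + b)) :=
  ((kill_iff.2 hX).ext hT (kill_iff.2 hZ)).mem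

theorem bigAdd_zero {U : Set C} : ∃ X ∈ bigAddClosure C U, IsZero X := by
  refine ⟨∐ (fun i : PEmpty.{v + 1} => (i.elim : C)), ⟨PEmpty, _, fun i => i.elim, ⟨Iso.refl _⟩⟩, ?_⟩
  rw [IsZero.iff_id_eq_zero]
  exact Sigma.hom_ext _ _ fun i => i.elim

theorem pow_zero_mem {U : Set C} (k : ℕ) : ∀ {X : C}, IsZero X → X ∈ coprodPowBig C U k := by
  induction k with
  | zero => exact fun h => h
  | succ k ih =>
    intro X hX
    obtain ⟨Z, hZ, hZ0⟩ := bigAdd_zero (U := U)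
    refine ⟨Z, X, 0, 𝟙 X, 0, ?_, hZ, ih hX⟩
    refine isomorphic_distinguished _ (contractible_distinguished X) _ ?_
    refine Triangle.isoMk _ _ (hX.iso hZ0).symm (Iso.refl _) (hX.iso (isZero_zero C)) ?_ ?_ ?_
    · exact hZ0.eq_of_src _ _
    · exact hX.eq_of_src _ _
    · exact hX.eq_of_src _ _

theorem bigAdd_mono {U V : Set C} (h : U ⊆ V) : bigAddClosure C U ⊆ bigAddClosure C V := by
  rintro X ⟨α, f, hf, e⟩
  exact ⟨α, f, fun i => h (hf i), e⟩

theorem pow_mono {U V : Set C} (h : U ⊆ V) (k : ℕ) : coprodPowBig C U k ⊆ coprodPowBig C V k := by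
  induction k with
  | zero => exact fun _ h => h
  | succ k ih =>
    rintro Y ⟨X, Z, f, g, w, hT, hX, hZ⟩
    exact ⟨X, Z, f, g, w, hT, bigAdd_mono h hX, ih hZ⟩

theorem smdPow_mono {U V : Set C} (h : U ⊆ V) {k l : ℕ} (hkl : k ≤ l) :
    smd C (coprodPowBig C U k) ⊆ smd C (coprodPowBig C V l) := by
  intro X hX
  obtain ⟨m, rfl⟩ := Nat.exists_eq_add_of_le hkl
  exact smdPow_star (contractible_distinguished X) (smd_mono (pow_mono h k) hX)
    (mem_smd (pow_zero_mem m (isZero_zero C)))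

/-! ### Composing approximations without the octahedral axiom -/

theorem compose_approx {S : Set C} {F E₁ D₁ E₂ D₂ : C}
    {a : E₁ ⟶ F} {b : F ⟶ D₁} {c : D₁ ⟶ E₁⟦(1 : ℤ)⟧}
    (h₁ : Triangle.mk a b c ∈ (distTriang C))
    {a' : E₂ ⟶ D₁} {b' : D₁ ⟶ D₂} {c' : D₂ ⟶ E₂⟦(1 : ℤ)⟧}
    (h₂ : Triangle.mk a' b' c' ∈ (distTriang C)) (hD : D₂ ∈ lOrth C S) :
    ∃ (E D : C) (f : E ⟶ F) (g : F ⟶ D) (h : D ⟶ E⟦(1 : ℤ)⟧) (x : E₁ ⟶ E) (y : E ⟶ E₂)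
      (z : E₂ ⟶ E₁⟦(1 : ℤ)⟧), Triangle.mk f g h ∈ (distTriang C) ∧
      Triangle.mk x y z ∈ (distTriang C) ∧ D ∈ lOrth C S := by
  obtain ⟨E, x, y, hE⟩ := distinguished_cocone_triangle₂ (a' ≫ c)
  obtain ⟨f, hf1', hf2'⟩ := fill h₁ hE
  obtain ⟨D, g, h, hT⟩ := distinguished_cocone_triangle f
  refine ⟨E, D, f, g, h, x, y, _, hT, hE, ?_⟩
  intro t ht u
  have hD2 : ∀ w : D₂ ⟶ t, w = 0 := fun w => hD t ht w
  -- injectivity on `D₁`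
  have inj1 : ∀ w : D₁ ⟶ t, a' ≫ w = 0 → w = 0 := by
    intro w hw
    obtain ⟨w', hw'⟩ := ye2 h₂ w hw
    have : w' = 0 := hD2 w'
    rw [hw', this, comp_zero]
  -- injectivity on `F`
  have inj2 : ∀ w : F ⟶ t, f ≫ w = 0 → w = 0 := by
    intro w hw
    have haw : a ≫ w = 0 := by rw [← hf1', Category.assoc, hw, comp_zero]
    obtain ⟨v, hv⟩ := ye2 h₁ w haw
    have hv' : w = b ≫ v := hv
    have hya : y ≫ a' ≫ v = 0 := by
      rw [← Category.assoc, hf2', Category.assoc, ← hv', hw]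
    obtain ⟨s, hs⟩ := ye3 hE (a' ≫ v) hya
    have hs' : a' ≫ v = (a' ≫ c) ≫ s := hs
    have h0 : v - c ≫ s = 0 := inj1 _ (by
      rw [Preadditive.comp_sub, hs', Category.assoc, sub_self])
    have hbc : b ≫ c = 0 := comp_distTriang_mor_zero₂₃ _ h₁
    rw [hv', sub_eq_zero.1 h0, ← Category.assoc, hbc, zero_comp]
  -- surjectivity on `ΣD₁ → ΣE₂`
  have surj1 : ∀ w : E₂⟦(1 : ℤ)⟧ ⟶ t, ∃ v : D₁⟦(1 : ℤ)⟧ ⟶ t, w = a'⟦(1 : ℤ)⟧' ≫ v := by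
    intro w
    obtain ⟨v, hv⟩ := ye4 h₂ w (hD2 _)
    have hv' : w = (-a'⟦(1 : ℤ)⟧') ≫ v := hv
    exact ⟨-v, by rw [hv']; simp⟩
  -- surjectivity on `ΣF → ΣE`
  have surj2 : ∀ w : E⟦(1 : ℤ)⟧ ⟶ t, ∃ v : F⟦(1 : ℤ)⟧ ⟶ t, w = f⟦(1 : ℤ)⟧' ≫ v := by
    intro w
    have hc0 : c ≫ x⟦(1 : ℤ)⟧' ≫ w = 0 := by
      apply inj1
      have : (a' ≫ c) ≫ x⟦(1 : ℤ)⟧' = 0 := comp_distTriang_mor_zero₃₁ _ hE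
      rw [← Category.assoc, ← Category.assoc, this, zero_comp]
    obtain ⟨v, hv⟩ := ye4 h₁ (x⟦(1 : ℤ)⟧' ≫ w) hc0
    have hv' : x⟦(1 : ℤ)⟧' ≫ w = (-a⟦(1 : ℤ)⟧') ≫ v := hv
    have h0 : (-x⟦(1 : ℤ)⟧') ≫ (w + f⟦(1 : ℤ)⟧' ≫ v) = 0 := by
      rw [Preadditive.neg_comp, Preadditive.comp_add, hv', ← Category.assoc, ← Functor.map_comp,
        hf1']
      simp
    obtain ⟨r, hr⟩ := ye5 hE (w + f⟦(1 : ℤ)⟧' ≫ v) h0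
    have hr' : w + f⟦(1 : ℤ)⟧' ≫ v = (-y⟦(1 : ℤ)⟧') ≫ r := hr
    obtain ⟨q, hq⟩ := surj1 r
    refine ⟨-(b⟦(1 : ℤ)⟧' ≫ q) - v, ?_⟩
    have hyb : y⟦(1 : ℤ)⟧' ≫ a'⟦(1 : ℤ)⟧' = f⟦(1 : ℤ)⟧' ≫ b⟦(1 : ℤ)⟧' := by
      rw [← Functor.map_comp, ← Functor.map_comp, hf2']
    rw [eq_sub_of_add_eq hr', hq, Preadditive.comp_sub, Preadditive.comp_neg, Preadditive.neg_comp,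
      ← Category.assoc, hyb, Category.assoc]
  have hu : g ≫ u = 0 := inj2 _ (by
    have : f ≫ g = 0 := comp_distTriang_mor_zero₁₂ _ hT
    rw [← Category.assoc, this, zero_comp])
  obtain ⟨w, hw⟩ := ye3 hT u hu
  have hw' : u = h ≫ w := hw
  obtain ⟨v, hv⟩ := surj2 w
  have : h ≫ f⟦(1 : ℤ)⟧' = 0 := comp_distTriang_mor_zero₃₁ _ hT
  rw [hw', hv, ← Category.assoc, this, zero_comp]

open ZeroObject in
theorem approx_zero {F : C} {S D : Set C} (hS : (0 : C) ∈ S) (hF : F ∈ D) :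
    approxTriangle C F S D :=
  ⟨0, F, 0, 𝟙 F, 0, contractible_distinguished₁ F, hS, hF⟩

theorem approx_weak_iter {G Rm : ℤ → Set C} {A : ℤ} (h : IsWeakGApprox C G Rm A) {j : ℤ} {F : C}
    (hF : F ∈ Rm j) (m : ℕ) :
    approxTriangle C F (gBarInt C G (-A - j - m) (A - j)) (Rm (j + m)) := by
  induction m with
  | zero => exact approx_zero (.zero (isZero_zero C)) (by simpa using hF)
  | succ m ih =>
    obtain ⟨E₁, D₁, a, b, c, h₁, hE₁, hD₁⟩ := ih
    obtain ⟨E₂, D₂, a', b', c', h₂, hE₂, hD₂⟩ := h.approx _ _ hD₁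
    rw [← h.orthMetric.orth] at hD₂
    obtain ⟨E, D, f, g, k, x, y, z, hT, hE, hD⟩ := compose_approx h₁ h₂ hD₂
    rw [h.orthMetric.orth] at hD
    refine ⟨E, D, f, g, k, hT, ?_, ?_⟩
    · exact .ext x y z hE (gBarInt_mono G (by push_cast; omega) (by omega) hE₁)
        (gBarInt_mono G (by push_cast; omega) (by omega) hE₂)
    · rwa [show j + ((m + 1 : ℕ) : ℤ) = j + m + 1 by push_cast; ring]

theorem approx_pow_iter {G Rm : ℤ → Set C} {A : ℤ} (h : IsGApprox C G Rm A) {j : ℤ} {F : C}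
    (hF : F ∈ Rm j) (m : ℕ) :
    approxTriangle C F (smd C (coprodPowBig C (unionIcc C G (-A - j - m) (A - j)) (m * A.toNat)))
      (Rm (j + m)) := by
  induction m with
  | zero =>
    exact approx_zero (mem_smd (pow_zero_mem _ (isZero_zero C))) (by simpa using hF)
  | succ m ih =>
    obtain ⟨E₁, D₁, a, b, c, h₁, hE₁, hD₁⟩ := ih
    obtain ⟨E₂, D₂, a', b', c', h₂, hE₂, hD₂⟩ := h.approx' _ _ hD₁
    rw [← h.orthMetric.orth] at hD₂
    obtain ⟨E, D, f, g, k, x, y, z, hT, hE, hD⟩ := compose_approx h₁ h₂ hD₂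
    rw [h.orthMetric.orth] at hD
    refine ⟨E, D, f, g, k, hT, ?_, ?_⟩
    · rw [Nat.succ_mul]
      exact smdPow_star hE
        (smdPow_mono (unionIcc_mono G (by push_cast; omega) (by omega)) le_rfl hE₁)
        (smdPow_mono (unionIcc_mono G (by push_cast; omega) (by omega)) le_rfl hE₂)
    · rwa [show j + ((m + 1 : ℕ) : ℤ) = j + m + 1 by push_cast; ring]

/-! ### The vanishing of a homotopy colimit -/

/-- Powers of an endomorphism. -/
def pw {X : C} (s : X ⟶ X) : ℕ → (X ⟶ X)
  | 0 => 𝟙 X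
  | n + 1 => s ≫ pw s n

theorem pw_add {X : C} (s : X ⟶ X) (m n : ℕ) : pw s (m + n) = pw s m ≫ pw s n := by
  induction m with
  | zero => simp [pw]
  | succ m ih => rw [Nat.add_right_comm, pw, pw, ih, Category.assoc]

theorem surj_of_nil {X : C} (s : X ⟶ X) {K : C} (n : ℕ) : ∀ g : K ⟶ X, g ≫ pw s n = 0 →
    ∃ g' : K ⟶ X, g = g' ≫ (𝟙 X - s) := by
  induction n with
  | zero => intro g hg; exact ⟨0, by simpa [pw] using hg⟩
  | succ n ih =>
    intro g hg
    obtain ⟨g', hg'⟩ := ih (g ≫ s) (by rw [Category.assoc]; exact hg)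
    refine ⟨g + g', ?_⟩
    rw [Preadditive.add_comp, ← hg']
    simp

theorem inj_of_nil {X : C} (s : X ⟶ X) {K : C} (n : ℕ) (g : K ⟶ X) (hg : g ≫ pw s n = 0)
    (h : g ≫ (𝟙 X - s) = 0) : g = 0 := by
  have hs : g ≫ s = g := by
    rw [Preadditive.comp_sub, Category.comp_id, sub_eq_zero] at h
    exact h.symm
  have : ∀ m, g ≫ pw s m = g := by
    intro m
    induction m with
    | zero => simp [pw]
    | succ m ih => rw [pw, ← Category.assoc, hs, ih]
  rw [← this n, hg]

/-- The shift map of a sequence. -/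
noncomputable def seqShift (E : ℕ → C) (e : ∀ n, E n ⟶ E (n + 1)) :
    seqCoprod C E ⟶ seqCoprod C E :=
  Sigma.desc (fun n => e n.down ≫ seqInj C E (n.down + 1))

theorem inj_seqShift (E : ℕ → C) (e : ∀ n, E n ⟶ E (n + 1)) (n : ℕ) :
    seqInj C E n ≫ seqShift E e = e n ≫ seqInj C E (n + 1) := by
  unfold seqInj seqShift
  exact Sigma.ι_desc _ _

theorem finite_decomp {J : Type v} [Finite J] (f : J → C) {K : C} (P : (K ⟶ ∐ f) → Prop)
    (h0 : P 0) (hadd : ∀ a b, P a → P b → P (a + b)) (hι : ∀ j (a : K ⟶ f j), P (a ≫ Sigma.ι f j))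
    (g : K ⟶ ∐ f) : P g := by
  classical
  haveI := Fintype.ofFinite J
  have hid : 𝟙 (∐ f) = ∑ j, Sigma.π f j ≫ Sigma.ι f j := by
    apply Sigma.hom_ext
    intro b
    rw [Preadditive.comp_sum, Finset.sum_eq_single b]
    · simp
    · intro c _ hc
      rw [← Category.assoc, Sigma.ι_π_of_ne _ hc.symm, zero_comp]
    · simp
  rw [← Category.comp_id g, hid, Preadditive.comp_sum]
  refine Finset.sum_induction _ P hadd h0 fun j _ => ?_
  rw [← Category.assoc]
  exact hι j _

theorem nil_of_compact {E : ℕ → C} (e : ∀ n, E n ⟶ E (n + 1)) {K : C} (hK : IsCompactObj C K)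
    (N : ℕ) (hN : ∀ k, N ≤ k → ∀ f : K ⟶ E k, f = 0) (g : K ⟶ seqCoprod C E) :
    ∃ n, g ≫ pw (seqShift E e) n = 0 := by
  have hinj : ∀ d k : ℕ, N ≤ k + d → ∀ a : K ⟶ E k,
      ∃ n, (a ≫ seqInj C E k) ≫ pw (seqShift E e) n = 0 := by
    intro d
    induction d with
    | zero =>
      intro k hk a
      exact ⟨0, by rw [hN k hk a, zero_comp, zero_comp]⟩
    | succ d ih =>
      intro k hk a
      obtain ⟨n, hn⟩ := ih (k + 1) (by omega) (a ≫ e k)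
      refine ⟨n + 1, ?_⟩
      rw [pw, ← Category.assoc, Category.assoc a, inj_seqShift, ← Category.assoc a]
      exact hn
  have key : ∃ (s : Finset (ULift.{v} ℕ))
      (h : K ⟶ ∐ (fun i : {a : ULift.{v} ℕ // a ∈ s} => E i.1.down))
      (d : (∐ (fun i : {a : ULift.{v} ℕ // a ∈ s} => E i.1.down)) ⟶ seqCoprod C E),
      g = h ≫ d ∧ ∀ i, Sigma.ι (fun i : {a : ULift.{v} ℕ // a ∈ s} => E i.1.down) i ≫ d =
        seqInj C E i.1.down := by
    obtain ⟨s, h, hg⟩ := hK _ _ g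
    exact ⟨s, h, _, hg, fun i => Sigma.ι_desc _ _⟩
  obtain ⟨s, h, d, rfl, hd⟩ := key
  refine finite_decomp (fun i : {a : ULift.{v} ℕ // a ∈ s} => E i.1.down)
    (fun h => ∃ n, (h ≫ d) ≫ pw (seqShift E e) n = 0) ?_ ?_ ?_ h
  · exact ⟨0, by rw [zero_comp, zero_comp]⟩
  · rintro a b ⟨m, hm⟩ ⟨n, hn⟩
    refine ⟨m + n, ?_⟩
    rw [Preadditive.add_comp, Preadditive.add_comp, pw_add, ← Category.assoc, hm, zero_comp,
      zero_add, ← pw_add, add_comm, pw_add, ← Category.assoc, hn, zero_comp]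
  · intro j a
    obtain ⟨n, hn⟩ := hinj N j.1.down (by omega) a
    refine ⟨n, ?_⟩
    rw [Category.assoc a, hd]
    exact hn

theorem tau_zero {G : ℤ → Set C} (hcg : CompactlyGenerated C) (hG : IsGenSeq C G)
    {E : ℕ → C} (e : ∀ n, E n ⟶ E (n + 1))
    (hv : ∀ n : ℤ, ∃ N : ℕ, ∀ k, N ≤ k → ∀ m : ℤ, n ≤ m → ∀ K ∈ G m, ∀ f : K ⟶ E k, f = 0)
    {t : C} (τ : ∀ k, E k ⟶ t) (hτ : ∀ k, τ k = e k ≫ τ (k + 1)) : τ 0 = 0 := by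
  obtain ⟨H, π, δ, hT⟩ := distinguished_cocone_triangle (𝟙 _ - seqShift E e)
  have hGH : ∀ K ∈ unionAll C G, ∀ f : K ⟶ H, f = 0 := by
    intro K hK f
    obtain ⟨n, hn⟩ := Set.mem_iUnion.1 hK
    have hK' : K⟦(-1 : ℤ)⟧ ∈ gInt C G (n - 1) (n + 1) :=
      hG.shift_cond n (Or.inl (Or.inl ⟨K, hn, ⟨Iso.refl _⟩⟩))
    have hc : IsCompactObj C (K⟦(-1 : ℤ)⟧) := by
      have : K⟦(-1 : ℤ)⟧ ∈ compacts C := by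
        rw [← hG.generates]
        refine smd_mono (fun X hX => extClosure_mono ?_ hX) hK'
        intro X hX
        obtain ⟨m, _, hm⟩ := Set.mem_iUnion₂.1 hX
        exact Set.mem_iUnion.2 ⟨m, hm⟩
      exact this
    obtain ⟨N, hN⟩ := hv (n - 1)
    have hvan : ∀ k, N ≤ k → ∀ f : K⟦(-1 : ℤ)⟧ ⟶ E k, f = 0 := by
      intro k hk
      refine hom_zero_smd (fun X hX => hom_zero_extClosure ?_ hX) hK'
      intro X hX
      obtain ⟨m, hm, hm'⟩ := Set.mem_iUnion₂.1 hX
      exact hN k hk m hm.1 X hm'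
    have hzero : f ≫ δ = 0 := by
      let i : (K⟦(-1 : ℤ)⟧)⟦(1 : ℤ)⟧ ≅ K := (shiftFunctorCompIsoId C (-1 : ℤ) 1 (by norm_num)).app K
      obtain ⟨w, hw⟩ := (shiftFunctor C (1 : ℤ)).map_surjective (i.hom ≫ f ≫ δ)
      have hδ : δ ≫ (𝟙 _ - seqShift E e)⟦(1 : ℤ)⟧' = 0 := comp_distTriang_mor_zero₃₁ _ hT
      have hw0 : w ≫ (𝟙 _ - seqShift E e) = 0 := by
        apply (shiftFunctor C (1 : ℤ)).map_injective
        rw [Functor.map_comp, hw, Category.assoc, Category.assoc, hδ, comp_zero, comp_zero,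
          Functor.map_zero]
      obtain ⟨n, hn⟩ := nil_of_compact e hc N hvan w
      have hw1 := inj_of_nil _ n w hn hw0
      rw [hw1, Functor.map_zero] at hw
      rw [← Category.id_comp (f ≫ δ), ← i.inv_hom_id, Category.assoc, ← hw, comp_zero]
    obtain ⟨g, hg⟩ := ce3 hT f hzero
    have hg' : f = g ≫ π := hg
    obtain ⟨n', hn'⟩ := nil_of_compact e (hG.compact n hn) N
      (fun k hk => hN k hk n (by omega) K hn) g
    obtain ⟨g', hgg⟩ := surj_of_nil _ n' g hn'
    have hz : (𝟙 _ - seqShift E e) ≫ π = 0 := comp_distTriang_mor_zero₁₂ _ hT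
    rw [hg', hgg, Category.assoc, hz, comp_zero]
  have hH : IsZero H := by
    apply hcg
    intro K hK
    rw [← hG.generates] at hK
    exact hom_zero_smd (fun X hX => hom_zero_extClosure hGH hX) hK
  let T : seqCoprod C E ⟶ t := Sigma.desc (fun n => τ n.down)
  have hιT : ∀ n, seqInj C E n ≫ T = τ n := fun n => Sigma.ι_desc _ _
  have hφT : (𝟙 _ - seqShift E e) ≫ T = 0 := by
    apply Sigma.hom_ext
    rintro ⟨n⟩
    change seqInj C E n ≫ _ = seqInj C E n ≫ _
    rw [Preadditive.sub_comp, Category.id_comp, Preadditive.comp_sub, ← Category.assoc,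
      inj_seqShift, Category.assoc, hιT, hιT, ← hτ, sub_self, comp_zero]
  obtain ⟨u, hu⟩ := ye2 hT T hφT
  have hu0 : u = 0 := hH.eq_of_src _ _
  rw [← hιT 0, hu, hu0, comp_zero, comp_zero]

theorem sub_RG {G Rm : ℤ → Set C} {A : ℤ} (hcg : CompactlyGenerated C) (hG : IsGenSeq C G)
    (h : IsWeakGApprox C G Rm A) (i : ℤ) : Rm i ⊆ RG C G (i - A) := by
  intro F hF t ht f
  let St : ℕ → Type _ := fun k => {p : Σ D : C, (D ⟶ t) // p.1 ∈ Rm (i + k)}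
  have step : ∀ (k : ℕ) (p : St k), ∃ (q : St (k + 1)) (e : p.1.1 ⟶ q.1.1), p.1.2 = e ≫ q.1.2 := by
    rintro k ⟨⟨D, τ⟩, hD⟩
    obtain ⟨E, D', a, b, c, hT, hE, hD'⟩ := h.approx _ _ hD
    have hEt : ∀ u : E ⟶ t, u = 0 := by
      refine hom_zero_bigClosure (fun X hX => ?_) hE
      obtain ⟨m, hm, hm'⟩ := Set.mem_iUnion₂.1 hX
      have hm2 := hm.2
      refine ht X (mem_smd (.of (Set.mem_iUnion₂.2 ⟨m, ?_, hm'⟩)))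
      simp only [Set.mem_Iic]
      omega
    obtain ⟨τ', hτ'⟩ := ye2 hT τ (hEt _)
    refine ⟨⟨⟨D', τ'⟩, ?_⟩, b, hτ'⟩
    change D' ∈ Rm (i + ((k + 1 : ℕ) : ℤ))
    rwa [show i + ((k + 1 : ℕ) : ℤ) = i + k + 1 by push_cast; ring]
  choose nx e he using step
  let sq : ∀ k, St k := fun k => Nat.rec ⟨⟨F, f⟩, by simpa using hF⟩ nx k
  refine tau_zero hcg hG (E := fun k => (sq k).1.1) (fun k => e k (sq k)) ?_
    (fun k => (sq k).1.2) (fun k => he k (sq k))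
  intro n
  refine ⟨(A - i - n).toNat, fun k hk m hm K hK u => ?_⟩
  exact h.hom_vanish m (i + k) (by omega) K hK _ (sq k).2 u

/-- The metric of a weakly approximable category is equivalent to any metric equivalent
to `R^G`. -/
theorem metric_compare {G Rm Rm' : ℤ → Set C} {A : ℤ} (hcg : CompactlyGenerated C)
    (hG : IsGenSeq C G) (h : IsWeakGApprox C G Rm A) (hequiv : MetricNEquiv C Rm' (RG C G)) :
    ∃ N : ℕ, (∀ i, Rm' i ⊆ Rm (i - N)) ∧ (∀ i, Rm i ⊆ Rm' (i - N)) ∧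
      (∀ i, MG C G (i + N) ⊆ Rm' i) := by
  obtain ⟨n, hn, h1, h2⟩ := hequiv
  have hA := h.A_pos
  have hRG : ∀ i, RG C G (i + A) ⊆ Rm i := by
    intro i
    rw [← h.orthMetric.orth i]
    exact lr_mono fun X hX => (h.cond1 i hX).1
  have hRGanti : ∀ i j, i ≤ j → RG C G j ⊆ RG C G i := fun i j hij => lr_mono (MG_anti G hij)
  have e : (((n + A).toNat : ℕ) : ℤ) = n + A := Int.toNat_of_nonneg (by omega)
  refine ⟨(n + A).toNat, fun i X hX => ?_, fun i X hX => ?_, fun i X hX => ?_⟩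
  · rw [e]
    apply hRG
    rw [show i - (n + A) + A = i - n by ring]
    apply h1
    rwa [sub_add_cancel]
  · rw [e]
    apply h2
    rw [show i - (n + A) + n = i - A by ring]
    exact sub_RG hcg hG h i hX
  · rw [e] at hX
    apply h2
    exact hRGanti _ _ (by omega) (subset_lr _ hX)

theorem weak_transfer {G Rm Rm' : ℤ → Set C} {A : ℤ} (hR' : IsOrthMetric C Rm')
    (h : IsWeakGApprox C G Rm A) {N : ℕ} (h1 : ∀ i, Rm' i ⊆ Rm (i - N))
    (h2 : ∀ i, Rm i ⊆ Rm' (i - N)) (h3 : ∀ i, MG C G (i + N) ⊆ Rm' i) (A' : ℤ)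
    (hA' : A + N + 1 ≤ A') : IsWeakGApprox C G Rm' A' := by
  have hA := h.A_pos
  have hvan : ∀ n i : ℤ, A' ≤ n + i → homZero C (G n) (Rm' i) := by
    intro n i hni K hK X hX f
    exact h.hom_vanish n (i - N) (by omega) K hK X (h1 i hX) f
  refine
    { orthMetric := hR'
      A_pos := by omega
      cond0 := ?_
      cond1 := ?_
      cond2 := fun n => ⟨A' - n, fun i hi => hvan n i (by omega)⟩
      hom_vanish := hvan
      approx := ?_ }
  · intro i X hX
    obtain ⟨n, hn, hn'⟩ := Set.mem_iUnion₂.1 (h.cond0 i hX)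
    refine Set.mem_iUnion₂.2 ⟨n, ?_, hn'⟩
    have hn2 : |n| ≤ A := hn
    change |n| ≤ A'
    omega
  · intro i X hX
    refine ⟨h3 i (MG_anti G (by omega) hX), (h.cond1 i (MG_anti G (by omega) hX)).2⟩
  · intro i F hF
    obtain ⟨E, D, a, b, c, hT, hE, hD⟩ := approx_weak_iter h (h1 i hF) (2 * N + 1)
    refine ⟨E, D, a, b, c, hT, gBarInt_mono G (by push_cast; omega) (by omega) hE, ?_⟩
    have := h2 _ hD
    rwa [show i - (N : ℤ) + ((2 * N + 1 : ℕ) : ℤ) - N = i + 1 by push_cast; ring] at this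

theorem pow_transfer {G Rm Rm' : ℤ → Set C} {A : ℤ} (hR' : IsOrthMetric C Rm')
    (h : IsGApprox C G Rm A) {N : ℕ} (h1 : ∀ i, Rm' i ⊆ Rm (i - N))
    (h2 : ∀ i, Rm i ⊆ Rm' (i - N)) (h3 : ∀ i, MG C G (i + N) ⊆ Rm' i) (A' : ℤ)
    (hA' : A + N + 1 ≤ A') (hA'' : (2 * N + 1) * A.toNat ≤ A'.toNat) :
    IsGApprox C G Rm' A' := by
  refine { weak_transfer hR' h.toIsWeakGApprox h1 h2 h3 A' hA' with approx' := ?_ }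
  intro i F hF
  obtain ⟨E, D, a, b, c, hT, hE, hD⟩ := approx_pow_iter h (h1 i hF) (2 * N + 1)
  refine ⟨E, D, a, b, c, hT, ?_, ?_⟩
  · exact smdPow_mono (unionIcc_mono G (by push_cast; omega) (by omega)) hA'' hE
  · have := h2 _ hD
    rwa [show i - (N : ℤ) + ((2 * N + 1 : ℕ) : ℤ) - N = i + 1 by push_cast; ring] at this

end Helpers

theorem statement_11 (G Rm' : ℤ → Set C)
    (hcg : CompactlyGenerated C) (hG : IsGenSeq C G)
    (hR' : IsOrthMetric C Rm') (hequiv : MetricNEquiv C Rm' (RG C G))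
    (h : ∃ (Rm : ℤ → Set C) (A : ℤ), IsWeakGApprox C G Rm A) :
    (∃ A' : ℤ, IsWeakGApprox C G Rm' A') ∧
    ((∃ (Rm : ℤ → Set C) (A : ℤ), IsGApprox C G Rm A) →
      ∃ A' : ℤ, IsGApprox C G Rm' A') := by
  constructor
  · obtain ⟨Rm, A, hw⟩ := h
    obtain ⟨N, h1, h2, h3⟩ := metric_compare hcg hG hw hequiv
    exact ⟨A + N + 1, weak_transfer hR' hw h1 h2 h3 _ le_rfl⟩
  · rintro ⟨Rm, A, ha⟩
    obtain ⟨N, h1, h2, h3⟩ := metric_compare hcg hG ha.toIsWeakGApprox hequiv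
    have hA := ha.A_pos
    refine ⟨A + N + 1 + ((2 * N + 1) * A.toNat : ℕ),
      pow_transfer hR' ha h1 h2 h3 _ (by omega) (by omega)⟩

end GApprox
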